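/- arXiv:1203.6855 — 2 statements merged into one kernel-verified Lean document; each statement's English description precedes it below -/
import Mathlib

section
/- Let X be a real Banach space and M a closed linear subspace of X. Then X∖M is lineable if and only if X∖M is spaceable. -/
open Filter Topology

/-- A bounded linear operator `T` on `C(K, ℝ)` is a *weak multiplier* if for every bounded
pairwise disjoint sequence `(e_n)` in `C(K, ℝ)` and every sequence `(x_n)` in `K` with
`e_n (x_n) = 0` for all `n`, one has `T (e_n) (x_n) → 0`. -/
def IsWeakMultiplier {K : Type*} [TopologicalSpace K] [CompactSpace K]
    (T : C(K, ℝ) →L[ℝ] C(K, ℝ)) : Prop :=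
  ∀ (e : ℕ → C(K, ℝ)) (x : ℕ → K),
    (∃ M : ℝ, ∀ n, ‖e n‖ ≤ M) →
    (∀ i j, i ≠ j → e i * e j = 0) →
    (∀ n, (e n) (x n) = 0) →
    Filter.Tendsto (fun n => (T (e n)) (x n)) Filter.atTop (nhds 0)

/-- An operator on `C(K, ℝ)` is *weakly compact* if the image of the closed unit ball has
compact closure in the weak topology. -/
def IsWeaklyCompactOp {K : Type*} [TopologicalSpace K] [CompactSpace K]
    (S : C(K, ℝ) →L[ℝ] C(K, ℝ)) : Prop :=
  IsCompact (closure ((toWeakSpace ℝ C(K, ℝ)) '' (S '' Metric.closedBall 0 1)))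

/-- An operator on `C(K, ℝ)` is a *weak multiplication* if it has the form `g•I + S` with
`g ∈ C(K, ℝ)` and `S` weakly compact. -/
def IsWeakMultiplication {K : Type*} [TopologicalSpace K] [CompactSpace K]
    (T : C(K, ℝ) →L[ℝ] C(K, ℝ)) : Prop :=
  ∃ (g : C(K, ℝ)) (S : C(K, ℝ) →L[ℝ] C(K, ℝ)),
    IsWeaklyCompactOp S ∧ T = ContinuousLinearMap.mul ℝ C(K, ℝ) g + S

/-- A subset `A` of a real vector space is *lineable* if `A ∪ {0}` contains an
infinite-dimensional subspace. -/
def Lineable {X : Type*} [AddCommGroup X] [Module ℝ X] (A : Set X) : Prop :=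
  ∃ W : Submodule ℝ X, ¬ FiniteDimensional ℝ W ∧ (W : Set X) ⊆ A ∪ {0}

/-- A subset `A` of a real normed space is *spaceable* if `A ∪ {0}` contains a closed
infinite-dimensional subspace. -/
def Spaceable {X : Type*} [NormedAddCommGroup X] [NormedSpace ℝ X] (A : Set X) : Prop :=
  ∃ W : Submodule ℝ X, IsClosed (W : Set X) ∧ ¬ FiniteDimensional ℝ W ∧ (W : Set X) ⊆ A ∪ {0}

/-!
Given an infinite-dimensional subspace `W` meeting `M` only in `0`, Mazur's construction of basic
sequences is carried out inside `W`. It yields finite-dimensional subspaces `U 0 < U 1 < ⋯` of `W`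
and closed subspaces `F n` of finite codimension such that `U m ≤ U n ⊔ F n` for all `m` and `n`.
Each `F n` is so small that `‖u‖ ≤ 2 * ‖u + v‖` for `u ∈ U n` and `v ∈ F n`, and that `U n` meets
`F n ⊔ M` only in `0`. The closure `V` of `⨆ n, U n` is infinite-dimensional and is contained in
each closed subspace `U n ⊔ F n`, so a vector of `V ∩ M` lies in every `F n`. Its distance to `U n`
tends to `0`, and the norm inequality then forces it to vanish.
-/

theorem sup_inf_le_of_disjoint_sup {α : Type*} [Lattice α] [IsModularLattice α] [OrderBot α]
    {a b c : α} (h : Disjoint a (b ⊔ c)) : (a ⊔ b) ⊓ c ≤ b :=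
  calc (a ⊔ b) ⊓ c ≤ (b ⊔ a) ⊓ (b ⊔ c) := by
        rw [sup_comm a b]
        exact inf_le_inf_left _ le_sup_right
    _ = b ⊔ a ⊓ (b ⊔ c) := sup_inf_assoc_of_le a le_sup_left
    _ = b := by rw [h.eq_bot, sup_bot_eq]

theorem not_finiteDimensional_of_strictMono_of_le {K V : Type*} [DivisionRing K] [AddCommGroup V]
    [Module K V] {U : ℕ → Submodule K V} {W : Submodule K V} (hU : StrictMono U)
    (hUW : ∀ n, U n ≤ W) : ¬ FiniteDimensional K W := fun _ ↦
  not_strictMono_of_wellFoundedGT (fun n ↦ (Submodule.mapIic W).symm ⟨U n, hUW n⟩)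
    fun _ _ hmn ↦ (Submodule.mapIic W).symm.strictMono (hU hmn)

section NormedSpace

variable {𝕜 X : Type*} [RCLike 𝕜] [NormedAddCommGroup X] [NormedSpace 𝕜 X]
  {M U F V W : Submodule 𝕜 X}

theorem exists_isClosed_isCompl_of_disjoint [FiniteDimensional 𝕜 U] (hM : IsClosed (M : Set X))
    (hUM : Disjoint U M) : ∃ F : Submodule 𝕜 X, M ≤ F ∧ IsClosed (F : Set X) ∧ IsCompl U F := by
  obtain ⟨G, hG, hUG⟩ :=
    (Submodule.ClosedComplemented.of_finiteDimensional (U.map M.mkQ)).exists_isClosed_isCompl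
  refine ⟨G.comap M.mkQ, M.le_comap_mkQ G, hG.preimage M.mkQL.continuous, ?_, ?_⟩
  · refine Submodule.disjoint_def.2 fun u hu huG ↦ Submodule.disjoint_def.1 hUM u hu ?_
    exact (Submodule.Quotient.mk_eq_zero M).1
      (Submodule.disjoint_def.1 hUG.disjoint _ (Submodule.mem_map_of_mem hu) huG)
  · refine Submodule.codisjoint_iff_exists_add_eq.2 fun x ↦ ?_
    obtain ⟨_, g, ⟨u, hu, rfl⟩, hg, hug⟩ :=
      Submodule.codisjoint_iff_exists_add_eq.1 hUG.codisjoint (M.mkQ x)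
    refine ⟨u, x - u, hu, ?_, add_sub_cancel u x⟩
    rwa [Submodule.mem_comap, map_sub, ← hug, add_sub_cancel_left]

theorem exists_finset_strongDual_forall_norm_le_mul (U : Submodule 𝕜 X) [FiniteDimensional 𝕜 U]
    {C : ℝ} (hC : 1 < C) :
    ∃ t : Finset (StrongDual 𝕜 X), (∀ f ∈ t, ‖f‖ ≤ 1) ∧
      ∀ u ∈ U, u ≠ 0 → ∃ f ∈ t, ‖u‖ ≤ C * ‖f u‖ := by
  classical
  have := FiniteDimensional.proper_rclike 𝕜 U
  choose f hf hfu using fun u : U ↦ exists_dual_vector'' 𝕜 (u : X)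
  have hnhds (u : U) (hu : u ∈ Metric.sphere (0 : U) 1) :
      {v : U | 1 < C * ‖f u v‖} ∈ 𝓝 u := by
    refine (isOpen_lt continuous_const (by fun_prop)).mem_nhds ?_
    have hu1 : ‖(u : X)‖ = 1 := mem_sphere_zero_iff_norm.1 hu
    simpa [hfu, hu1] using hC
  obtain ⟨s, -, hs⟩ := (isCompact_sphere (0 : U) 1).elim_nhds_subcover _ hnhds
  refine ⟨s.image f, Finset.forall_mem_image.2 fun u _ ↦ hf u, fun u hu hu0 ↦ ?_⟩
  have hnorm : 0 < ‖u‖ := norm_pos_iff.2 hu0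
  let v : U := (‖u‖⁻¹ : 𝕜) • ⟨u, hu⟩
  have hv : v ∈ Metric.sphere (0 : U) 1 := by simp [v, norm_smul, hnorm.ne']
  obtain ⟨w, hw, hwv⟩ := Set.mem_iUnion₂.1 (hs hv)
  refine ⟨f w, Finset.mem_image_of_mem f hw, ?_⟩
  have hwu : 1 < C * (‖u‖⁻¹ * ‖f w u‖) := by simpa [v, norm_smul] using hwv
  rw [mul_left_comm, ← div_eq_inv_mul, one_lt_div hnorm] at hwu
  exact hwu.le

theorem exists_isClosed_cofg_forall_norm_le_mul_norm_add (U : Submodule 𝕜 X)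
    [FiniteDimensional 𝕜 U] {C : ℝ} (hC : 1 < C) :
    ∃ F : Submodule 𝕜 X, IsClosed (F : Set X) ∧ F.CoFG ∧
      ∀ u ∈ U, ∀ v ∈ F, ‖u‖ ≤ C * ‖u + v‖ := by
  obtain ⟨t, ht, htU⟩ := exists_finset_strongDual_forall_norm_le_mul U hC
  let φ : X →L[𝕜] t → 𝕜 := .pi fun f ↦ f.1
  refine ⟨φ.ker, φ.isClosed_ker, .ker φ.toLinearMap, fun u hu v hv ↦ ?_⟩
  obtain rfl | hu0 := eq_or_ne u 0
  · rw [norm_zero]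
    positivity
  obtain ⟨f, hf, hfu⟩ := htU u hu hu0
  have hfv : f v = 0 := congrFun hv ⟨f, hf⟩
  calc ‖u‖ ≤ C * ‖f (u + v)‖ := by rwa [map_add, hfv, add_zero]
    _ ≤ C * ‖u + v‖ := by
      gcongr
      exact f.le_of_opNorm_le_of_le (ht f hf) le_rfl |>.trans_eq (one_mul _)

/-- A tail space of `U` modulo `M`, from which Mazur's construction takes the vectors that extend
`U`. The conditions `disjoint_sup` and `norm_le` say that the projection of `U ⊔ F` onto `U` along
`F` kills `(U ⊔ F) ⊓ M` and has norm at most `2`; any constant greater than `1` would do. -/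
structure IsTailSpace (M U F : Submodule 𝕜 X) : Prop where
  isClosed : IsClosed (F : Set X)
  cofg : F.CoFG
  disjoint_sup : Disjoint U (F ⊔ M)
  norm_le : ∀ u ∈ U, ∀ v ∈ F, ‖u‖ ≤ 2 * ‖u + v‖

namespace IsTailSpace

theorem bot_top (M : Submodule 𝕜 X) : IsTailSpace M ⊥ ⊤ where
  isClosed := isClosed_univ
  cofg := .top
  disjoint_sup := disjoint_bot_left
  norm_le := by simp

theorem disjoint (h : IsTailSpace M U F) : Disjoint U F :=
  h.disjoint_sup.mono_right le_sup_left

theorem finiteDimensional (h : IsTailSpace M U F) : FiniteDimensional 𝕜 U :=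
  Module.Finite.iff_fg.2 (h.cofg.fg_of_disjoint h.disjoint)

theorem isClosed_sup (h : IsTailSpace M U F) : IsClosed ((U ⊔ F : Submodule 𝕜 X) : Set X) :=
  have := h.cofg
  Submodule.isClosed_mono_of_finiteDimensional_quotient h.isClosed le_sup_right

theorem mono (h : IsTailSpace M U F) (hVF : V ≤ F) (hV : IsClosed (V : Set X)) (hV' : V.CoFG) :
    IsTailSpace M U V where
  isClosed := hV
  cofg := hV'
  disjoint_sup := h.disjoint_sup.mono_right (sup_le_sup_right hVF M)
  norm_le u hu v hv := h.norm_le u hu v (hVF hv)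

end IsTailSpace

theorem exists_isTailSpace [FiniteDimensional 𝕜 U] (hM : IsClosed (M : Set X))
    (hUM : Disjoint U M) : ∃ F, IsTailSpace M U F := by
  obtain ⟨F, hMF, hF, hUF⟩ := exists_isClosed_isCompl_of_disjoint hM hUM
  obtain ⟨G, hG, hG', hUG⟩ := exists_isClosed_cofg_forall_norm_le_mul_norm_add U one_lt_two
  have hF' : F.CoFG :=
    Submodule.FG.cofg_of_isCompl hUF (Module.Finite.iff_fg.1 inferInstance)
  exact ⟨F ⊓ G, hF.inter hG, hF'.inf hG', hUF.disjoint.mono_right (sup_le inf_le_left hMF),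
    fun u hu v hv ↦ hUG u hu v hv.2⟩

theorem IsTailSpace.exists_gt (h : IsTailSpace M U F) (hM : IsClosed (M : Set X))
    (hW : ¬ FiniteDimensional 𝕜 W) (hWM : Disjoint W M) (hUW : U ≤ W) :
    ∃ U' F', IsTailSpace M U' F' ∧ U' ≤ W ∧ U < U' ∧ U' ⊔ F' ≤ U ⊔ F := by
  have hWF : W ⊓ F ≠ ⊥ := fun hbot ↦
    hW (Module.Finite.iff_fg.2 (h.cofg.fg_of_disjoint (disjoint_iff.2 hbot)))
  obtain ⟨w, ⟨hwW, hwF⟩, hw⟩ := Submodule.exists_mem_ne_zero_of_ne_bot hWF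
  have hwU : w ∉ U := fun hwU ↦ hw (Submodule.disjoint_def.1 h.disjoint w hwU hwF)
  have hU'W : U ⊔ 𝕜 ∙ w ≤ W := sup_le hUW ((Submodule.span_singleton_le_iff_mem w W).2 hwW)
  have := h.finiteDimensional
  obtain ⟨G, hG⟩ := exists_isTailSpace hM (hWM.mono_left hU'W)
  refine ⟨U ⊔ 𝕜 ∙ w, G ⊓ F,
    hG.mono inf_le_left (hG.isClosed.inter h.isClosed) (hG.cofg.inf h.cofg), hU'W, ?_, ?_⟩
  · exact left_lt_sup.2 fun hle ↦ hwU ((Submodule.span_singleton_le_iff_mem w U).1 hle)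
  · refine sup_le (sup_le_sup_left ?_ U) (inf_le_right.trans le_sup_right)
    exact (Submodule.span_singleton_le_iff_mem w F).2 hwF

theorem exists_strictMono_isTailSpace (hM : IsClosed (M : Set X))
    (hW : ¬ FiniteDimensional 𝕜 W) (hWM : Disjoint W M) :
    ∃ U F : ℕ → Submodule 𝕜 X, (∀ n, IsTailSpace M (U n) (F n)) ∧ StrictMono U ∧
      Antitone (U ⊔ F) := by
  have hstep (p : {p : Submodule 𝕜 X × Submodule 𝕜 X // IsTailSpace M p.1 p.2 ∧ p.1 ≤ W}) :
      ∃ q : {q : Submodule 𝕜 X × Submodule 𝕜 X // IsTailSpace M q.1 q.2 ∧ q.1 ≤ W},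
        p.1.1 < q.1.1 ∧ q.1.1 ⊔ q.1.2 ≤ p.1.1 ⊔ p.1.2 := by
    obtain ⟨U', F', h, hU'W, hlt, hle⟩ := p.2.1.exists_gt hM hW hWM p.2.2
    exact ⟨⟨(U', F'), h, hU'W⟩, hlt, hle⟩
  choose next hlt hle using hstep
  let p (n : ℕ) := next^[n] ⟨(⊥, ⊤), .bot_top M, bot_le⟩
  have hp (n : ℕ) : p (n + 1) = next (p n) := Function.iterate_succ_apply' ..
  refine ⟨fun n ↦ (p n).1.1, fun n ↦ (p n).1.2, fun n ↦ (p n).2.1,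
    strictMono_nat_of_lt_succ fun n ↦ ?_, antitone_nat_of_succ_le fun n ↦ ?_⟩
  · exact hp n ▸ hlt (p n)
  · simpa only [Pi.sup_apply, hp n] using hle (p n)

theorem eq_zero_of_mem_closure_iSup_of_forall_isTailSpace {U F : ℕ → Submodule 𝕜 X}
    (h : ∀ n, IsTailSpace M (U n) (F n)) (hU : Monotone U) {x : X}
    (hx : x ∈ (⨆ n, U n).topologicalClosure) (hxF : ∀ n, x ∈ F n) : x = 0 := by
  rw [← SetLike.mem_coe, Submodule.topologicalClosure_coe] at hx
  refine norm_le_zero_iff.1 (le_of_forall_pos_lt_add fun ε hε ↦ ?_)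
  obtain ⟨y, hy, hxy⟩ := Metric.mem_closure_iff.1 hx (ε / 3) (by positivity)
  obtain ⟨n, hyn⟩ := (Submodule.mem_iSup_of_directed U hU.directed_le).1 hy
  rw [dist_eq_norm] at hxy
  have hynorm : ‖y‖ ≤ 2 * ‖x - y‖ := by
    simpa only [← sub_eq_add_neg, norm_sub_rev x y] using
      (h n).norm_le y hyn (-x) (neg_mem (hxF n))
  calc ‖x‖ ≤ ‖x - y‖ + ‖y‖ := norm_le_norm_sub_add x y
    _ < 0 + ε := by linarith

theorem disjoint_topologicalClosure_iSup_of_forall_isTailSpace {U F : ℕ → Submodule 𝕜 X}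
    (h : ∀ n, IsTailSpace M (U n) (F n)) (hU : Monotone U) (hUF : Antitone (U ⊔ F)) :
    Disjoint (⨆ n, U n).topologicalClosure M := by
  have hclosure (n : ℕ) : (⨆ m, U m).topologicalClosure ≤ U n ⊔ F n := by
    refine Submodule.topologicalClosure_minimal _ (iSup_le fun m ↦ ?_) (h n).isClosed_sup
    calc U m ≤ U (max m n) := hU (le_max_left m n)
      _ ≤ U (max m n) ⊔ F (max m n) := le_sup_left
      _ ≤ U n ⊔ F n := hUF (le_max_right m n)
  refine Submodule.disjoint_def.2 fun x hx hxM ↦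
    eq_zero_of_mem_closure_iSup_of_forall_isTailSpace h hU hx fun n ↦ ?_
  exact sup_inf_le_of_disjoint_sup (h n).disjoint_sup ⟨hclosure n hx, hxM⟩

theorem exists_isClosed_not_finiteDimensional_disjoint (hM : IsClosed (M : Set X))
    (hW : ¬ FiniteDimensional 𝕜 W) (hWM : Disjoint W M) :
    ∃ V : Submodule 𝕜 X, IsClosed (V : Set X) ∧ ¬ FiniteDimensional 𝕜 V ∧ Disjoint V M := by
  obtain ⟨U, F, h, hU, hUF⟩ := exists_strictMono_isTailSpace hM hW hWM
  exact ⟨(⨆ n, U n).topologicalClosure, Submodule.isClosed_topologicalClosure _,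
    not_finiteDimensional_of_strictMono_of_le hU fun n ↦
      (le_iSup U n).trans (Submodule.le_topologicalClosure _),
    disjoint_topologicalClosure_iSup_of_forall_isTailSpace h hU.monotone hUF⟩

end NormedSpace

theorem coe_subset_compl_union_zero_iff_disjoint {R X : Type*} [Semiring R] [AddCommMonoid X]
    [Module R X] {W M : Submodule R X} : (W : Set X) ⊆ (M : Set X)ᶜ ∪ {0} ↔ Disjoint W M := by
  simp only [Submodule.disjoint_def, Set.subset_def, Set.mem_union, Set.mem_compl_iff,
    Set.mem_singleton_iff, SetLike.mem_coe, imp_iff_not_or]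

theorem lineable_compl_iff_spaceable_compl_general {X : Type*} [NormedAddCommGroup X]
    [NormedSpace ℝ X] (M : Submodule ℝ X) (hM : IsClosed (M : Set X)) :
    Lineable ((M : Set X)ᶜ) ↔ Spaceable ((M : Set X)ᶜ) := by
  simp only [Lineable, Spaceable, coe_subset_compl_union_zero_iff_disjoint]
  constructor
  · rintro ⟨W, hW, hWM⟩
    exact exists_isClosed_not_finiteDimensional_disjoint hM hW hWM
  · rintro ⟨V, -, hV, hVM⟩
    exact ⟨V, hV, hVM⟩

/-- For a closed subspace `M` of a real Banach space `X`, the complement `X ∖ M` is lineable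
iff it is spaceable. -/
theorem lineable_compl_iff_spaceable_compl
    {X : Type*} [NormedAddCommGroup X] [NormedSpace ℝ X] [CompleteSpace X]
    (M : Submodule ℝ X) (hM : IsClosed (M : Set X)) :
    Lineable ((M : Set X)ᶜ) ↔ Spaceable ((M : Set X)ᶜ) :=
  lineable_compl_iff_spaceable_compl_general M hM
end

section
/- Let K be a compact Hausdorff space. If there exists a bounded linear operator on C(K) which is not a weak multiplier, then the quotient of L(C(K)) by the closed subspace M(C(K)) of weak multipliers is infinite-dimensional. -/
open Filter Topology

/-- The subspace of `L(C(K,ℝ))` consisting of the weak multipliers. -/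
noncomputable def weakMultipliers (K : Type*) [TopologicalSpace K] [CompactSpace K] :
    Submodule ℝ (C(K, ℝ) →L[ℝ] C(K, ℝ)) where
  carrier := {T | IsWeakMultiplier T}
  add_mem' := by
    intro T S hT hS e x hb hd hz
    have h := (hT e x hb hd hz).add (hS e x hb hd hz)
    simpa using h
  zero_mem' := by
    intro e x hb hd hz
    simp
  smul_mem' := by
    intro c T hT e x hb hd hz
    have h := (hT e x hb hd hz).const_mul c
    simpa using h

/-!
Suppose the quotient is finite-dimensional and `e`, `x` witness that `T` is not a weak multiplier.
The functionals `S ↦ S (e n) (x n)` are bounded and converge to `0` on weak multipliers, so they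
converge pointwise along a subsequence. Evaluating at `T` and at `f · T` and dividing shows that
`f (x n)` converges for every `f`, so the functionals `f ↦ T f (x n)` are weak* convergent.

On the other hand, `C(K)` then has a Grothendieck-type property: weak* convergent functionals tend
to `0` along bounded disjoint sequences. Given a weak* null sequence `q` and nonzero disjoint `e n`,
pick a point `z n` with `e (n + 1) (z n) ≠ 0` and a multiple `u n` of `e (n + 1)` with
`u n (z n) = 1`. For bounded scalars `a`, the operator `f ↦ ∑ a n • q n f • u n` sends `e n` to a
function with value `a n * q n (e n)` at `z n`, where `e n` vanishes. Along a subsequence these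
values converge both for `a n = 1` and for `a n = (-1) ^ n`, so `q n (e n)` tends to `0` there.
Hence `T (e n) (x n)` tends to `0` along a subsequence, a contradiction.
-/

lemma exists_strictMono_le_norm_of_not_tendsto_zero {E : Type*} [SeminormedAddCommGroup E]
    {c : ℕ → E} (hc : ¬ Tendsto c atTop (𝓝 0)) :
    ∃ ε > 0, ∃ ψ : ℕ → ℕ, StrictMono ψ ∧ ∀ n, ε ≤ ‖c (ψ n)‖ := by
  obtain ⟨ε, hε, hfreq⟩ : ∃ ε > 0, ∃ᶠ n in atTop, ε ≤ ‖c n‖ := by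
    simpa only [Metric.tendsto_nhds, not_forall, not_eventually, dist_zero_right, not_lt,
      exists_prop] using hc
  exact ⟨ε, hε, extraction_of_frequently_atTop hfreq⟩

lemma tendsto_zero_of_tendsto_of_tendsto_neg_one_pow_mul {R : Type*} [Ring R] [NoZeroDivisors R]
    [CharZero R] [TopologicalSpace R] [T2Space R] [ContinuousNeg R] {c : ℕ → R} {a b : R}
    (hc : Tendsto c atTop (𝓝 a)) (hc' : Tendsto (fun n => (-1) ^ n * c n) atTop (𝓝 b)) :
    Tendsto c atTop (𝓝 0) := by
  have heven : Tendsto (fun k : ℕ => 2 * k) atTop atTop :=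
    tendsto_id.const_mul_atTop' two_pos
  have hodd : Tendsto (fun k : ℕ => 2 * k + 1) atTop atTop :=
    tendsto_atTop_mono (fun k => Nat.le_succ _) heven
  have hba : b = a := tendsto_nhds_unique (hc'.comp heven) <|
    (hc.comp heven).congr fun k => by simp
  have hbna : b = -a := tendsto_nhds_unique (hc'.comp hodd) <|
    (hc.comp hodd).neg.congr fun k => by simp [pow_succ]
  rwa [← self_eq_neg.mp (hba.symm.trans hbna)]

lemma exists_strictMono_forall_tendsto_of_finiteDimensional_quotient {𝕜 V : Type*} [NormedField 𝕜]
    [ProperSpace 𝕜] [AddCommGroup V] [Module 𝕜 V] (W : Submodule 𝕜 V) [FiniteDimensional 𝕜 (V ⧸ W)]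
    (p : ℕ → V →ₗ[𝕜] 𝕜) (hW : ∀ v ∈ W, Tendsto (fun n => p n v) atTop (𝓝 0))
    (hbdd : ∀ v, ∃ C, ∀ n, ‖p n v‖ ≤ C) :
    ∃ φ : ℕ → ℕ, StrictMono φ ∧ ∀ v, ∃ l, Tendsto (fun n => p (φ n) v) atTop (𝓝 l) := by
  let b := Module.finBasis 𝕜 (V ⧸ W)
  choose v hv using fun i => W.mkQ_surjective (b i)
  choose C hC using fun i => hbdd (v i)
  have hcompact : IsCompact (Set.univ.pi fun i => Metric.closedBall (0 : 𝕜) (C i)) :=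
    isCompact_univ_pi fun i => isCompact_closedBall 0 (C i)
  obtain ⟨a, -, φ, hφ, ha⟩ := hcompact.tendsto_subseq (x := fun n i => p n (v i))
    fun n i _ => mem_closedBall_zero_iff.mpr (hC i n)
  refine ⟨φ, hφ, fun w => ?_⟩
  set c := b.repr (W.mkQ w)
  have hmem : w - ∑ i, c i • v i ∈ W := by
    rw [← Submodule.Quotient.mk_eq_zero W, ← Submodule.mkQ_apply, map_sub, map_sum]
    simp only [map_smul, hv, c, b.sum_repr, sub_self]
  have hlift : Tendsto (fun n => ∑ i, c i * p (φ n) (v i)) atTop (𝓝 (∑ i, c i * a i)) :=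
    tendsto_finsetSum _ fun i _ => (tendsto_pi_nhds.mp ha i).const_mul (c i)
  exact ⟨_, (((hW _ hmem).comp hφ.tendsto_atTop).add hlift).congr fun n => by simp⟩

lemma exists_tendsto_apply_of_forall_clm_tendsto {X 𝕜 E : Type*} [TopologicalSpace X]
    [CompactSpace X] [NontriviallyNormedField 𝕜] [NormedAddCommGroup E] [NormedSpace 𝕜 E]
    {v : ℕ → E} {x : ℕ → X}
    (hconv : ∀ S : E →L[𝕜] C(X, 𝕜), ∃ l, Tendsto (fun n => S (v n) (x n)) atTop (𝓝 l))
    {T : E →L[𝕜] C(X, 𝕜)} {ε : ℝ} (hε : 0 < ε) (hT : ∀ n, ε ≤ ‖T (v n) (x n)‖)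
    (f : C(X, 𝕜)) : ∃ l, Tendsto (fun n => f (x n)) atTop (𝓝 l) := by
  obtain ⟨l₁, h₁⟩ := hconv T
  obtain ⟨l₂, h₂⟩ := hconv (ContinuousLinearMap.mul 𝕜 C(X, 𝕜) f ∘L T)
  have hl₁ : l₁ ≠ 0 := norm_pos_iff.mp (hε.trans_le (ge_of_tendsto' h₁.norm hT))
  refine ⟨l₂ / l₁, (h₂.div h₁ hl₁).congr fun n => ?_⟩
  have hne : T (v n) (x n) ≠ 0 := norm_pos_iff.mp (hε.trans_le (hT n))
  simp [hne]

section DisjointFamilies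

variable {ι X : Type*} [TopologicalSpace X]

/-- A norm-bounded family of pairwise disjoint continuous functions, disjointness meaning that
products of distinct members vanish. -/
structure IsBoundedDisjoint [CompactSpace X] {R : Type*} [NonUnitalNormedRing R]
    (e : ι → C(X, R)) : Prop where
  bounded : ∃ M, ∀ i, ‖e i‖ ≤ M
  disjoint : Pairwise fun i j => e i * e j = 0

lemma apply_eq_zero_of_mul_eq_zero {R : Type*} [TopologicalSpace R] [MulZeroClass R]
    [NoZeroDivisors R] [ContinuousMul R] {f g : C(X, R)} (hfg : f * g = 0) {z : X}
    (hz : g z ≠ 0) : f z = 0 :=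
  (mul_eq_zero.mp (by simpa using DFunLike.congr_fun hfg z)).resolve_right hz

variable [CompactSpace X]

lemma IsBoundedDisjoint.comp_injective {κ R : Type*} [NonUnitalNormedRing R] {e : ι → C(X, R)}
    (he : IsBoundedDisjoint e) {σ : κ → ι} (hσ : Function.Injective σ) :
    IsBoundedDisjoint (e ∘ σ) where
  bounded := he.bounded.imp fun _ hM i => hM (σ i)
  disjoint := he.disjoint.comp_of_injective hσ

lemma norm_sum_le_of_pairwise_mul_eq_zero {R : Type*} [NonUnitalNormedRing R] [IsCancelMulZero R]
    {f : ι → C(X, R)} (hf : Pairwise fun i j => f i * f j = 0) {s : Finset ι} {C : ℝ} (hC : 0 ≤ C)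
    (hs : ∀ i ∈ s, ‖f i‖ ≤ C) : ‖∑ i ∈ s, f i‖ ≤ C := by
  lift C to NNReal using hC
  rw [← coe_nnnorm, ContinuousMap.nnnorm_sum_eq_sup s hf, NNReal.coe_le_coe]
  exact Finset.sup_le hs

lemma summable_of_pairwise_mul_eq_zero {R : Type*} [NonUnitalNormedRing R] [IsCancelMulZero R]
    [CompleteSpace R] {f : ι → C(X, R)} (hf : Pairwise fun i j => f i * f j = 0)
    (hf0 : Tendsto f cofinite (𝓝 0)) : Summable f := by
  refine summable_iff_vanishing_norm.mpr fun ε hε => ?_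
  have hfin : {i | ¬ ‖f i‖ < ε / 2}.Finite := by
    simpa using Metric.tendsto_nhds.mp hf0 (ε / 2) (half_pos hε)
  refine ⟨hfin.toFinset, fun s hs => ?_⟩
  refine (norm_sum_le_of_pairwise_mul_eq_zero hf (half_pos hε).le fun i hi => ?_).trans_lt
    (half_lt_self hε)
  have hlt : ‖f i‖ < ε / 2 := by
    simpa using fun h => Finset.disjoint_left.mp hs hi (hfin.mem_toFinset.mpr h)
  exact hlt.le

lemma IsBoundedDisjoint.summable_norm_apply {𝕜 : Type*} [RCLike 𝕜] {e : ι → C(X, 𝕜)}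
    (he : IsBoundedDisjoint e) (μ : StrongDual 𝕜 C(X, 𝕜)) : Summable fun i => ‖μ (e i)‖ := by
  obtain ⟨M, hM⟩ := he.bounded
  choose c hc hcμ using fun i => RCLike.exists_norm_eq_mul_self (μ (e i))
  refine summable_of_sum_le (c := ‖μ‖ * max M 0) (fun i => norm_nonneg _) fun s => ?_
  have hdisj : Pairwise fun i j => (c i • e i) * (c j • e j) = 0 := fun i j hij => by
    simp [he.disjoint hij]
  calc ∑ i ∈ s, ‖μ (e i)‖ = ‖μ (∑ i ∈ s, c i • e i)‖ := by
        rw [← RCLike.norm_of_nonneg (K := 𝕜) (Finset.sum_nonneg fun i _ => norm_nonneg _)]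
        simp [hcμ]
    _ ≤ ‖μ‖ * ‖∑ i ∈ s, c i • e i‖ := μ.le_opNorm _
    _ ≤ ‖μ‖ * max M 0 := by
        gcongr
        refine norm_sum_le_of_pairwise_mul_eq_zero hdisj (le_max_right _ _) fun i _ => ?_
        rw [norm_smul, hc, one_mul]
        exact (hM i).trans (le_max_left _ _)

lemma IsBoundedDisjoint.tendsto_apply {𝕜 : Type*} [RCLike 𝕜] {e : ι → C(X, 𝕜)}
    (he : IsBoundedDisjoint e) (μ : StrongDual 𝕜 C(X, 𝕜)) :
    Tendsto (fun i => μ (e i)) cofinite (𝓝 0) :=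
  tendsto_zero_iff_norm_tendsto_zero.mpr (he.summable_norm_apply μ).tendsto_cofinite_zero

lemma IsBoundedDisjoint.exists_clm_hasSum_smul [Countable ι] {𝕜 E : Type*}
    [NontriviallyNormedField 𝕜] [CompleteSpace 𝕜] [NormedAddCommGroup E] [NormedSpace 𝕜 E]
    [CompleteSpace E] {u : ι → C(X, 𝕜)} (hu : IsBoundedDisjoint u) {q : ι → StrongDual 𝕜 E}
    (hq : ∀ f, Tendsto (fun i => q i f) cofinite (𝓝 0)) :
    ∃ S : E →L[𝕜] C(X, 𝕜), ∀ f, HasSum (fun i => q i f • u i) (S f) := by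
  have hsum (f : E) : Summable fun i => q i f • u i := by
    obtain ⟨M, hM⟩ := hu.bounded
    refine summable_of_pairwise_mul_eq_zero (fun i j hij => ?_) ?_
    · simp [hu.disjoint hij]
    · exact NormedField.tendsto_zero_smul_of_tendsto_zero_of_bounded (hq f)
        (isBoundedUnder_of ⟨M, hM⟩)
  have hlim : Tendsto (fun (s : Finset ι) f => (∑ i ∈ s, (q i).smulRight (u i)) f) atTop
      (𝓝 fun f => ∑' i, q i f • u i) :=
    tendsto_pi_nhds.mpr fun f => by
      simpa [HasSum] using! (hsum f).hasSum
  exact ⟨continuousLinearMapOfTendsto _ hlim, fun f => (hsum f).hasSum⟩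

lemma exists_norm_apply_eq_norm [Nonempty X] {E : Type*} [SeminormedAddCommGroup E]
    (f : C(X, E)) : ∃ z, ‖f z‖ = ‖f‖ := by
  obtain ⟨z, -, hz⟩ := isCompact_univ.exists_isMaxOn Set.univ_nonempty
    f.continuous.norm.continuousOn
  exact ⟨z, (f.norm_coe_le_norm z).antisymm <|
    (ContinuousMap.norm_le_of_nonempty f).mpr fun y => hz (Set.mem_univ y)⟩

lemma exists_isBoundedDisjoint_apply_eq_one {𝕜 : Type*} [NormedField 𝕜] {e : ι → C(X, 𝕜)}
    (hd : Pairwise fun i j => e i * e j = 0) (hne : ∀ i, e i ≠ 0) :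
    ∃ (u : ι → C(X, 𝕜)) (z : ι → X), IsBoundedDisjoint u ∧ (∀ i, u i (z i) = 1) ∧
      Pairwise fun i j => e i (z j) = 0 := by
  have hpeak (i : ι) : ∃ z, ‖e i z‖ = ‖e i‖ := by
    obtain ⟨y, -⟩ := DFunLike.ne_iff.mp (hne i)
    have : Nonempty X := ⟨y⟩
    exact exists_norm_apply_eq_norm (e i)
  choose z hz using hpeak
  have hz0 (i : ι) : e i (z i) ≠ 0 := norm_ne_zero_iff.mp (by simpa [hz i] using hne i)
  refine ⟨fun i => (e i (z i))⁻¹ • e i, z, ⟨⟨1, fun i => ?_⟩, fun i j hij => ?_⟩, fun i => ?_,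
    fun i j hij => apply_eq_zero_of_mul_eq_zero (hd hij) (hz0 j)⟩
  · simp [norm_smul, hz, hne i]
  · simp [hd hij]
  · simp [hz0 i]

lemma IsBoundedDisjoint.tendsto_apply_of_forall_clm_tendsto {𝕜 E : Type*}
    [NontriviallyNormedField 𝕜] [CompleteSpace 𝕜] [CharZero 𝕜] [NormedAddCommGroup E]
    [NormedSpace 𝕜 E] [CompleteSpace E] {u : ℕ → C(X, 𝕜)}
    (hu : IsBoundedDisjoint u) {z : ℕ → X} (huz : ∀ n, u n (z n) = 1) {v : ℕ → E}
    (hconv : ∀ S : E →L[𝕜] C(X, 𝕜), ∃ l, Tendsto (fun n => S (v n) (z n)) atTop (𝓝 l))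
    {q : ℕ → StrongDual 𝕜 E} (hq : ∀ f, Tendsto (fun n => q n f) atTop (𝓝 0)) :
    Tendsto (fun n => q n (v n)) atTop (𝓝 0) := by
  have hmul (a : ℕ → 𝕜) (ha : ∀ n, ‖a n‖ ≤ 1) :
      ∃ l, Tendsto (fun n => a n * q n (v n)) atTop (𝓝 l) := by
    have haq (f : E) : Tendsto (fun n => (a n • q n) f) cofinite (𝓝 0) := by
      rw [Nat.cofinite_eq_atTop]
      refine squeeze_zero_norm (fun n => ?_) (tendsto_zero_iff_norm_tendsto_zero.mp (hq f))
      simpa using mul_le_of_le_one_left (norm_nonneg (q n f)) (ha n)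
    obtain ⟨S, hS⟩ := hu.exists_clm_hasSum_smul haq
    obtain ⟨l, hl⟩ := hconv S
    refine ⟨l, hl.congr fun n => ?_⟩
    have huz0 (m : ℕ) (hmn : m ≠ n) : u m (z n) = 0 :=
      apply_eq_zero_of_mul_eq_zero (hu.disjoint hmn) (by simp [huz])
    have heval : HasSum (fun m => (a m * q m (v n)) * u m (z n)) (S (v n) (z n)) := by
      simpa using! (hS (v n)).mapL (ContinuousMap.evalCLM 𝕜 (z n))
    have hsingle := hasSum_single (f := fun m => (a m * q m (v n)) * u m (z n)) n
      fun m hmn => by simp [huz0 m hmn]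
    simpa [huz] using heval.unique hsingle
  obtain ⟨l₁, h₁⟩ := hmul 1 (by simp)
  obtain ⟨l₂, h₂⟩ := hmul (fun n => (-1) ^ n) (by simp)
  exact tendsto_zero_of_tendsto_of_tendsto_neg_one_pow_mul (by simpa using h₁) h₂

end DisjointFamilies

section WeakMultiplierTests

variable {K : Type*} [TopologicalSpace K] [CompactSpace K]

/-- The data on which weak multipliers are tested: a bounded disjoint sequence together with zeros
`x n` of its members. -/
structure IsWeakMultiplierTest (e : ℕ → C(K, ℝ)) (x : ℕ → K) : Prop
    extends IsBoundedDisjoint e where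
  apply_eq_zero : ∀ n, e n (x n) = 0

lemma IsWeakMultiplierTest.comp_injective {e : ℕ → C(K, ℝ)} {x : ℕ → K}
    (h : IsWeakMultiplierTest e x) {σ : ℕ → ℕ} (hσ : Function.Injective σ) :
    IsWeakMultiplierTest (e ∘ σ) (x ∘ σ) where
  toIsBoundedDisjoint := h.toIsBoundedDisjoint.comp_injective hσ
  apply_eq_zero n := h.apply_eq_zero (σ n)

lemma exists_isWeakMultiplierTest_le_norm {T : C(K, ℝ) →L[ℝ] C(K, ℝ)}
    (hT : ¬ IsWeakMultiplier T) :
    ∃ e x, IsWeakMultiplierTest e x ∧ ∃ ε > 0, ∀ n, ε ≤ ‖T (e n) (x n)‖ := by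
  simp only [IsWeakMultiplier, not_forall] at hT
  obtain ⟨e, x, hbdd, hdisj, hzero, hT⟩ := hT
  obtain ⟨ε, hε, ψ, hψ, hle⟩ := exists_strictMono_le_norm_of_not_tendsto_zero hT
  have h : IsWeakMultiplierTest e x := ⟨⟨hbdd, fun i j => hdisj i j⟩, hzero⟩
  exact ⟨e ∘ ψ, x ∘ ψ, h.comp_injective hψ.injective, ε, hε, hle⟩

lemma IsWeakMultiplierTest.exists_strictMono_forall_tendsto
    [FiniteDimensional ℝ ((C(K, ℝ) →L[ℝ] C(K, ℝ)) ⧸ weakMultipliers K)] {e : ℕ → C(K, ℝ)}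
    {x : ℕ → K} (h : IsWeakMultiplierTest e x) :
    ∃ φ : ℕ → ℕ, StrictMono φ ∧ ∀ S : C(K, ℝ) →L[ℝ] C(K, ℝ),
      ∃ l, Tendsto (fun n => S (e (φ n)) (x (φ n))) atTop (𝓝 l) := by
  obtain ⟨M, hM⟩ := h.bounded
  let p (n : ℕ) : (C(K, ℝ) →L[ℝ] C(K, ℝ)) →ₗ[ℝ] ℝ :=
    (ContinuousMap.evalCLM ℝ (x n) ∘L ContinuousLinearMap.apply ℝ C(K, ℝ) (e n)).toLinearMap
  refine exists_strictMono_forall_tendsto_of_finiteDimensional_quotient (weakMultipliers K) p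
    (fun S hS => hS e x h.bounded (fun i j hij => h.disjoint hij) h.apply_eq_zero)
    fun S => ⟨‖S‖ * M, fun n => ?_⟩
  calc ‖S (e n) (x n)‖ ≤ ‖S (e n)‖ := (S (e n)).norm_coe_le_norm (x n)
    _ ≤ ‖S‖ * M := S.le_opNorm_of_le (hM n)

lemma IsBoundedDisjoint.tendsto_apply_of_tendsto_weakStar
    [FiniteDimensional ℝ ((C(K, ℝ) →L[ℝ] C(K, ℝ)) ⧸ weakMultipliers K)] {e : ℕ → C(K, ℝ)}
    (he : IsBoundedDisjoint e) {ν : ℕ → StrongDual ℝ C(K, ℝ)} {μ : StrongDual ℝ C(K, ℝ)}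
    (hν : ∀ f, Tendsto (fun n => ν n f) atTop (𝓝 (μ f))) :
    Tendsto (fun n => ν n (e n)) atTop (𝓝 0) := by
  by_contra hnot
  obtain ⟨ε, hε, ψ, hψ, hle⟩ := exists_strictMono_le_norm_of_not_tendsto_zero hnot
  have heψ : IsBoundedDisjoint (e ∘ ψ) := he.comp_injective hψ.injective
  have hne (n : ℕ) : e (ψ n) ≠ 0 := fun h0 => (hle n).not_gt (by simpa [h0] using hε)
  obtain ⟨u, z, hu, huz, hez⟩ := exists_isBoundedDisjoint_apply_eq_one heψ.disjoint hne
  have htest : IsWeakMultiplierTest (e ∘ ψ) (z ∘ Nat.succ) :=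
    ⟨heψ, fun n => hez n.succ_ne_self.symm⟩
  obtain ⟨χ, hχ, hconv⟩ := htest.exists_strictMono_forall_tendsto
  have hψχ : StrictMono (ψ ∘ χ) := hψ.comp hχ
  have hnull (f : C(K, ℝ)) : Tendsto (fun n => (ν (ψ (χ n)) - μ) f) atTop (𝓝 0) := by
    simpa using ((hν f).comp hψχ.tendsto_atTop).sub_const (μ f)
  have hdiff : Tendsto (fun n => (ν (ψ (χ n)) - μ) (e (ψ (χ n)))) atTop (𝓝 0) :=
    (hu.comp_injective (Nat.succ_injective.comp hχ.injective)).tendsto_apply_of_forall_clm_tendsto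
      (fun n => huz _) hconv hnull
  have hμ : Tendsto (fun n => μ (e (ψ (χ n)))) atTop (𝓝 0) :=
    Nat.cofinite_eq_atTop ▸ (he.comp_injective hψχ.injective).tendsto_apply μ
  have hzero : Tendsto (fun n => ν (ψ (χ n)) (e (ψ (χ n)))) atTop (𝓝 0) := by
    simpa using hdiff.add hμ
  exact (ge_of_tendsto' hzero.norm fun n => hle (χ n)).not_gt (by simpa using hε)

end WeakMultiplierTests

theorem quotient_by_weakMultipliers_infiniteDimensional_general
    {K : Type*} [TopologicalSpace K] [CompactSpace K]
    (h : ∃ T : C(K, ℝ) →L[ℝ] C(K, ℝ), ¬ IsWeakMultiplier T) :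
    ¬ FiniteDimensional ℝ ((C(K, ℝ) →L[ℝ] C(K, ℝ)) ⧸ weakMultipliers K) := by
  intro hfin
  obtain ⟨T, hT⟩ := h
  obtain ⟨e, x, htest, ε, hε, hle⟩ := exists_isWeakMultiplierTest_le_norm hT
  obtain ⟨φ, hφ, hconv⟩ := htest.exists_strictMono_forall_tendsto
  choose m hm using fun f => exists_tendsto_apply_of_forall_clm_tendsto hconv hε
    (fun n => hle (φ n)) (T f)
  let ν (n : ℕ) : StrongDual ℝ C(K, ℝ) := ContinuousMap.evalCLM ℝ (x (φ n)) ∘L T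
  have hν : Tendsto (fun n f => ν n f) atTop (𝓝 m) := tendsto_pi_nhds.mpr hm
  let μ : StrongDual ℝ C(K, ℝ) := continuousLinearMapOfTendsto ν hν
  have hzero : Tendsto (fun n => ν n (e (φ n))) atTop (𝓝 0) :=
    (htest.comp_injective hφ.injective).tendsto_apply_of_tendsto_weakStar (μ := μ) hm
  exact (ge_of_tendsto' hzero.norm fun n => hle (φ n)).not_gt (by simpa using hε)

theorem quotient_by_weakMultipliers_infiniteDimensional
    {K : Type*} [TopologicalSpace K] [CompactSpace K] [T2Space K]
    (h : ∃ T : C(K, ℝ) →L[ℝ] C(K, ℝ), ¬ IsWeakMultiplier T) :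
    ¬ FiniteDimensional ℝ ((C(K, ℝ) →L[ℝ] C(K, ℝ)) ⧸ weakMultipliers K) :=
  quotient_by_weakMultipliers_infiniteDimensional_general h
end
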